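/- Let A be a separable unital C*-algebra, let H₀ be a nonzero finite-dimensional Hilbert space, let Y = Irr(A,H₀) with its point-strong (equivalently point-norm) topology and Borel σ-algebra, and let μ be a Borel probability measure on Y such that μ(C) = 0 for every unitary equivalence class C ⊆ Y. Define θ : A → B(L²(Y,μ;H₀)) by (θ(a)ζ)(π) = π(a)(ζ(π)) for a ∈ A, ζ ∈ L²(Y,μ;H₀), π ∈ Y. Then θ is a unital representation of A and θ is weakly mixing. -/

import Mathlib

open scoped InnerProductSpace

noncomputable section

/-- The space of unital representations of `A` on `H`, i.e. unital `*`-homomorphisms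
`A → B(H)`. -/
abbrev CRep (A H : Type*) [CStarAlgebra A] [NormedAddCommGroup H]
    [InnerProductSpace ℂ H] [CompleteSpace H] : Type _ :=
  A →⋆ₐ[ℂ] (H →L[ℂ] H)

/-- The point-strong operator topology on `CRep A H`: the topology of pointwise convergence
with `B(H)` carrying the strong operator topology (i.e. pointwise convergence on vectors). -/
instance CRep.instTopologicalSpace (A H : Type*) [CStarAlgebra A] [NormedAddCommGroup H]
    [InnerProductSpace ℂ H] [CompleteSpace H] : TopologicalSpace (CRep A H) :=
  TopologicalSpace.induced (fun π => (fun (a : A) (x : H) => π a x)) inferInstance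

/-- A unital representation is irreducible if its only closed invariant subspaces are `⊥`
and the whole space. -/
def CRepIrreducible {A H : Type*} [CStarAlgebra A] [NormedAddCommGroup H]
    [InnerProductSpace ℂ H] [CompleteSpace H] (π : CRep A H) : Prop :=
  ∀ K : Submodule ℂ H, IsClosed (K : Set H) → (∀ a : A, ∀ x ∈ K, π a x ∈ K) →
    K = ⊥ ∨ K = ⊤

/-- A closed subspace `K` is invariant under a unital representation `π`. -/
def CRepInvariant {A H : Type*} [CStarAlgebra A] [NormedAddCommGroup H]
    [InnerProductSpace ℂ H] [CompleteSpace H]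
    (π : CRep A H) (K : Submodule ℂ H) : Prop :=
  ∀ a : A, ∀ x ∈ K, π a x ∈ K

/-- A unital representation is weakly mixing if it admits no nonzero finite-dimensional
closed invariant subspace. -/
def CRepWeaklyMixing {A H : Type*} [CStarAlgebra A] [NormedAddCommGroup H]
    [InnerProductSpace ℂ H] [CompleteSpace H]
    (π : CRep A H) : Prop :=
  ∀ K : Submodule ℂ H, IsClosed (K : Set H) → FiniteDimensional ℂ K →
    CRepInvariant π K → K = ⊥

/-- The space `Irr(A,H)` of irreducible representations, with the (subspace) point-strong
operator topology. -/
abbrev IrrRep (A H : Type*) [CStarAlgebra A] [NormedAddCommGroup H]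
    [InnerProductSpace ℂ H] [CompleteSpace H] : Type _ :=
  {π : CRep A H // CRepIrreducible π}

/-- `Irr(A,H)` carries the Borel σ-algebra of the point-strong operator topology. -/
instance IrrRep.instMeasurableSpace (A H : Type*) [CStarAlgebra A] [NormedAddCommGroup H]
    [InnerProductSpace ℂ H] [CompleteSpace H] : MeasurableSpace (IrrRep A H) :=
  borel _

instance IrrRep.instBorelSpace (A H : Type*) [CStarAlgebra A] [NormedAddCommGroup H]
    [InnerProductSpace ℂ H] [CompleteSpace H] : BorelSpace (IrrRep A H) :=
  ⟨rfl⟩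

/-!
A finite-dimensional invariant subspace of `L²(Y, μ; H)` contains an irreducible one, `K`. Choosing
representatives linearly turns the inclusion of `K` into evaluation maps `K → H`, and since `A` is
separable, almost every one of them intertwines `K` with the representation `y ∈ Y`. By Schur's
lemma each nonzero one makes `y` unitarily equivalent to `K`, so these `y` lie in a single
equivalence class, which is null. Hence almost all evaluation maps vanish and `K = 0`.
-/

section Intertwiners

variable {A H G E : Type*} [CStarAlgebra A]
  [NormedAddCommGroup H] [InnerProductSpace ℂ H] [CompleteSpace H]
  [NormedAddCommGroup G] [InnerProductSpace ℂ G] [CompleteSpace G]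
  [NormedAddCommGroup E] [InnerProductSpace ℂ E] [CompleteSpace E]
  {π : CRep A H} {ρ : CRep A G} {σ : CRep A E}

/-- The bounded operator `T` is an intertwiner from the representation `π` to the
representation `ρ`. -/
def CRep.Intertwines (π : CRep A H) (ρ : CRep A G) (T : H →L[ℂ] G) : Prop :=
  ∀ (a : A) (x : H), T (π a x) = ρ a (T x)

/-- Unitary equivalence of representations, possibly on different Hilbert spaces: some unitary
intertwines `π` with `ρ`. -/
def CRep.UnitarilyEquivalent (π : CRep A H) (ρ : CRep A G) : Prop :=
  ∃ Z : H ≃ₗᵢ[ℂ] G, ∀ (a : A) (x : H), ρ a (Z x) = Z (π a x)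

namespace CRep

theorem UnitarilyEquivalent.symm (h : π.UnitarilyEquivalent ρ) : ρ.UnitarilyEquivalent π := by
  obtain ⟨Z, hZ⟩ := h
  refine ⟨Z.symm, fun a x => Z.injective ?_⟩
  rw [← hZ, Z.apply_symm_apply, Z.apply_symm_apply]

theorem UnitarilyEquivalent.trans (h : π.UnitarilyEquivalent ρ) (h' : ρ.UnitarilyEquivalent σ) :
    π.UnitarilyEquivalent σ := by
  obtain ⟨Z, hZ⟩ := h
  obtain ⟨W, hW⟩ := h'
  exact ⟨Z.trans W, fun a x => (hW a (Z x)).trans (congrArg W (hZ a x))⟩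

theorem norm_apply_le (π : CRep A H) (a : A) : ‖π a‖ ≤ ‖a‖ :=
  NonUnitalStarAlgHom.norm_apply_le π a

theorem inner_apply_left (π : CRep A H) (a : A) (x y : H) : ⟪π a x, y⟫_ℂ = ⟪x, π (star a) y⟫_ℂ := by
  rw [map_star, ContinuousLinearMap.star_eq_adjoint, ContinuousLinearMap.adjoint_inner_right]

open scoped CStarAlgebra in
theorem continuous_apply_apply (π : CRep A H) (x : H) : Continuous fun a : A => π a x :=
  (map_continuous π).clm_apply continuous_const

namespace Intertwines

variable {T : H →L[ℂ] G}

theorem adjoint (hT : π.Intertwines ρ T) : ρ.Intertwines π T.adjoint := by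
  intro a y
  refine ext_inner_right ℂ fun x => ?_
  calc ⟪T.adjoint (ρ a y), x⟫_ℂ = ⟪y, ρ (star a) (T x)⟫_ℂ := by
        rw [ContinuousLinearMap.adjoint_inner_left, inner_apply_left]
    _ = ⟪π a (T.adjoint y), x⟫_ℂ := by
        rw [← hT, ← ContinuousLinearMap.adjoint_inner_left, inner_apply_left]

theorem comp {S : G →L[ℂ] E} (hS : ρ.Intertwines σ S) (hT : π.Intertwines ρ T) :
    π.Intertwines σ (S ∘L T) := fun a x =>
  (congrArg S (hT a x)).trans (hS a (T x))

theorem of_dense {s : Set A} (hs : Dense s) (h : ∀ a ∈ s, ∀ x, T (π a x) = ρ a (T x)) :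
    π.Intertwines ρ T := fun a x =>
  congrFun ((T.continuous.comp (π.continuous_apply_apply x)).ext_on hs
    (ρ.continuous_apply_apply (T x)) fun a ha => h a ha x) a

end Intertwines

end CRep

namespace CRepIrreducible

theorem exists_eq_smul_one [FiniteDimensional ℂ H] (hπ : CRepIrreducible π) {P : H →L[ℂ] H}
    (hP : π.Intertwines π P) : ∃ c : ℂ, P = c • 1 := by
  cases subsingleton_or_nontrivial H
  · exact ⟨0, Subsingleton.elim _ _⟩
  obtain ⟨c, hc⟩ := Module.End.exists_eigenvalue (P : H →ₗ[ℂ] H)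
  have hinv : ∀ a, ∀ x ∈ Module.End.eigenspace (P : H →ₗ[ℂ] H) c,
      π a x ∈ Module.End.eigenspace (P : H →ₗ[ℂ] H) c := by
    intro a x hx
    rw [Module.End.mem_eigenspace_iff, ContinuousLinearMap.coe_coe] at hx ⊢
    rw [hP, hx, map_smul]
  have htop : Module.End.eigenspace (P : H →ₗ[ℂ] H) c = ⊤ :=
    (hπ _ (Submodule.closed_of_finiteDimensional _) hinv).resolve_left hc
  exact ⟨c, ContinuousLinearMap.ext fun x =>
    Module.End.mem_eigenspace_iff.1 (htop ▸ Submodule.mem_top)⟩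

variable [FiniteDimensional ℂ H] {T : H →L[ℂ] G}

theorem exists_norm_eq_mul_of_intertwines (hπ : CRepIrreducible π) (hT : π.Intertwines ρ T) :
    ∃ r : ℝ, ∀ x, ‖T x‖ = r * ‖x‖ := by
  obtain ⟨c, hc⟩ := hπ.exists_eq_smul_one (hT.adjoint.comp hT)
  refine ⟨√c.re, fun x => ?_⟩
  have hinner : RCLike.re ⟪(T.adjoint ∘L T) x, x⟫_ℂ = c.re * ‖x‖ ^ 2 := by
    rw [hc, smul_apply, one_apply_eq_self, inner_smul_left, inner_self_eq_norm_sq_to_K]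
    simp [← Complex.ofReal_pow]
  rw [T.apply_norm_eq_sqrt_inner_adjoint_left, hinner, Real.sqrt_mul' _ (sq_nonneg _),
    Real.sqrt_sq (norm_nonneg x)]

theorem surjective_of_intertwines (hρ : CRepIrreducible ρ) (hT : π.Intertwines ρ T)
    (hT0 : T ≠ 0) : Function.Surjective T := by
  refine LinearMap.range_eq_top (f := (T : H →ₗ[ℂ] G)).1 ?_
  refine (hρ _ (Submodule.closed_of_finiteDimensional _) ?_).resolve_left fun h =>
    hT0 (ContinuousLinearMap.coe_injective (LinearMap.range_eq_bot.1 h))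
  rintro a _ ⟨x, rfl⟩
  exact ⟨π a x, hT a x⟩

theorem unitarilyEquivalent_of_intertwines (hπ : CRepIrreducible π) (hρ : CRepIrreducible ρ)
    (hT : π.Intertwines ρ T) (hT0 : T ≠ 0) : π.UnitarilyEquivalent ρ := by
  obtain ⟨r, hr⟩ := hπ.exists_norm_eq_mul_of_intertwines hT
  have hr_pos : 0 < r := by
    obtain ⟨x, hx⟩ := DFunLike.exists_ne hT0
    exact pos_of_mul_pos_left (hr x ▸ norm_pos_iff.2 hx) (norm_nonneg x)
  have hr_ne : (r : ℂ) ≠ 0 := Complex.ofReal_ne_zero.2 hr_pos.ne'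
  let V : H →ₗᵢ[ℂ] G :=
    { toLinearMap := (r : ℂ)⁻¹ • (T : H →ₗ[ℂ] G)
      norm_map' := fun x => by
        rw [LinearMap.smul_apply, ContinuousLinearMap.coe_coe, norm_smul, hr, norm_inv,
          Complex.norm_of_nonneg hr_pos.le, inv_mul_cancel_left₀ hr_pos.ne'] }
  have hV : Function.Surjective V := fun y => by
    obtain ⟨x, rfl⟩ := hρ.surjective_of_intertwines hT hT0 y
    refine ⟨(r : ℂ) • x, ?_⟩
    change (r : ℂ)⁻¹ • T ((r : ℂ) • x) = T x
    rw [map_smul, inv_smul_smul₀ hr_ne]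
  refine ⟨.ofSurjective V hV, fun a x => ?_⟩
  change ρ a ((r : ℂ)⁻¹ • T x) = (r : ℂ)⁻¹ • T (π a x)
  rw [map_smul, hT]

end CRepIrreducible

end Intertwiners

section Subrepresentations

variable {A H : Type*} [CStarAlgebra A]
  [NormedAddCommGroup H] [InnerProductSpace ℂ H] [CompleteSpace H]
  {π : CRep A H} {K : Submodule ℂ H}

/-- The subrepresentation of `π` on an invariant subspace `K`. -/
def CRepInvariant.restrict [CompleteSpace K] (hK : CRepInvariant π K) : CRep A K where
  toFun a := (π a).restrict (hK a)
  map_one' := by ext; simp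
  map_mul' a b := by ext; simp
  map_zero' := by ext; simp
  map_add' a b := by ext; simp
  commutes' c := by ext; simp [Algebra.algebraMap_eq_smul_one]
  map_star' a := by
    rw [ContinuousLinearMap.star_eq_adjoint, ContinuousLinearMap.eq_adjoint_iff]
    intro x y
    simpa using π.inner_apply_left (star a) (x : H) y

theorem CRepInvariant.intertwines_subtypeL [CompleteSpace K] (hK : CRepInvariant π K) :
    hK.restrict.Intertwines π K.subtypeL :=
  fun _ _ => rfl

theorem CRepInvariant.irreducible_restrict [CompleteSpace K] (hK : CRepInvariant π K)
    (hmin : ∀ M ≤ K, CRepInvariant π M → M = ⊥ ∨ M = K) : CRepIrreducible hK.restrict := by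
  intro M _ hM
  have hM' : CRepInvariant π (M.map K.subtype) := by
    rintro a _ ⟨x, hx, rfl⟩
    exact ⟨hK.restrict a x, hM a x hx, rfl⟩
  have hinj := Submodule.map_injective_of_injective K.injective_subtype
  exact (hmin _ (K.map_subtype_le M) hM').imp (fun h => hinj (h.trans (Submodule.map_bot _).symm))
    fun h => hinj (h.trans K.map_subtype_top.symm)

theorem CRepWeaklyMixing.of_irreducible_restrict
    (h : ∀ (K : Submodule ℂ H) [FiniteDimensional ℂ K] [CompleteSpace K] (hK : CRepInvariant π K),
      CRepIrreducible hK.restrict → K = ⊥) : CRepWeaklyMixing π := by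
  intro K _ hfin hK
  by_contra hne
  obtain ⟨L, ⟨hLfin, hL, hL0⟩, hmin⟩ := exists_minimalFor_of_wellFoundedLT
    (fun L : Submodule ℂ H => FiniteDimensional ℂ L ∧ CRepInvariant π L ∧ L ≠ ⊥)
    (fun L => Module.finrank ℂ L) ⟨K, hfin, hK, hne⟩
  have : CompleteSpace L := FiniteDimensional.complete ℂ L
  refine hL0 (h L hL (hL.irreducible_restrict fun M hML hM => or_iff_not_imp_left.2 fun hM0 => ?_))
  have hMfin : FiniteDimensional ℂ M := Submodule.finiteDimensional_of_le hML
  exact Submodule.eq_of_le_of_finrank_le hML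
    (hmin ⟨hMfin, hM, hM0⟩ (Submodule.finrank_mono hML))

end Subrepresentations

open MeasureTheory

section DecomposableOperators

variable {Y 𝕜 E F : Type*} [MeasurableSpace Y] {p : ENNReal} {μ : Measure Y}
  [NontriviallyNormedField 𝕜] [NormedAddCommGroup E] [NormedSpace 𝕜 E]
  [NormedAddCommGroup F] [NormedSpace 𝕜 F]

variable (𝕜 E p μ) in
theorem exists_linearMap_ae_eq_coeFn :
    ∃ T : Y → Lp E p μ →ₗ[𝕜] E, ∀ f : Lp E p μ, ∀ᵐ y ∂μ, T y f = f y := by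
  let b := Module.Basis.ofVectorSpace 𝕜 (Lp E p μ)
  refine ⟨fun y => b.constr 𝕜 fun i => b i y, fun f => ?_⟩
  induction b.mem_span f using Submodule.span_induction with
  | mem f hf =>
    obtain ⟨i, rfl⟩ := hf
    exact ae_of_all _ fun y => b.constr_basis 𝕜 _ i
  | zero =>
    filter_upwards [Lp.coeFn_zero E p μ] with y hy
    rw [map_zero, hy, Pi.zero_apply]
  | add f g _ _ hf hg =>
    filter_upwards [hf, hg, Lp.coeFn_add f g] with y hfy hgy hy
    rw [map_add, hfy, hgy, hy, Pi.add_apply]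
  | smul c f _ hf =>
    filter_upwards [hf, Lp.coeFn_smul c f] with y hfy hy
    rw [map_smul, hfy, hy, Pi.smul_apply]

variable [SecondCountableTopology E] {S : Y → E →L[𝕜] F}

theorem aestronglyMeasurable_clm_apply (hS : ∀ x, StronglyMeasurable fun y => S y x)
    {f : Y → E} (hf : AEStronglyMeasurable f μ) :
    AEStronglyMeasurable (fun y => S y (f y)) μ := by
  borelize E
  have hjoint : StronglyMeasurable (Function.uncurry fun x y => S y x) :=
    stronglyMeasurable_uncurry_of_continuous_of_stronglyMeasurable (fun y => (S y).continuous) hS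
  exact hjoint.aestronglyMeasurable.comp_aemeasurable (hf.aemeasurable.prodMk aemeasurable_id)

theorem memLp_clm_apply (hS : ∀ x, StronglyMeasurable fun y => S y x) {C : ℝ}
    (hC : ∀ y, ‖S y‖ ≤ C) {f : Y → E} (hf : MemLp f p μ) :
    MemLp (fun y => S y (f y)) p μ :=
  hf.of_le_mul (aestronglyMeasurable_clm_apply hS hf.aestronglyMeasurable)
    (ae_of_all _ fun y => (S y).le_of_opNorm_le (hC y) (f y))

variable [Fact (1 ≤ p)]

variable (p μ) in
/-- The decomposable operator on `Lᵖ` given by a bounded strongly measurable field of operators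
`S`, acting by `(S f)(y) = S y (f y)`. -/
def decomposableOp (hS : ∀ x, StronglyMeasurable fun y => S y x) {C : ℝ}
    (hC : ∀ y, ‖S y‖ ≤ C) : Lp E p μ →L[𝕜] Lp F p μ :=
  LinearMap.mkContinuous
    { toFun := fun f => (memLp_clm_apply hS hC (Lp.memLp f)).toLp
      map_add' := fun f g => by
        rw [← MemLp.toLp_add, MemLp.toLp_eq_toLp_iff]
        filter_upwards [Lp.coeFn_add f g] with y hy
        rw [hy, Pi.add_apply, map_add, Pi.add_apply]
      map_smul' := fun c f => by
        rw [RingHom.id_apply, ← MemLp.toLp_const_smul, MemLp.toLp_eq_toLp_iff]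
        filter_upwards [Lp.coeFn_smul c f] with y hy
        rw [hy, Pi.smul_apply, map_smul, Pi.smul_apply] }
    C fun f => by
      refine Lp.norm_le_mul_norm_of_ae_le_mul ?_
      filter_upwards [(memLp_clm_apply hS hC (Lp.memLp f)).coeFn_toLp] with y hy
      exact (congrArg norm hy).trans_le ((S y).le_of_opNorm_le (hC y) (f y))

theorem coeFn_decomposableOp (hS : ∀ x, StronglyMeasurable fun y => S y x) {C : ℝ}
    (hC : ∀ y, ‖S y‖ ≤ C) (f : Lp E p μ) :
    decomposableOp p μ hS hC f =ᵐ[μ] fun y => S y (f y) :=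
  (memLp_clm_apply hS hC (Lp.memLp f)).coeFn_toLp

end DecomposableOperators

section DirectIntegral

variable {A H G Y : Type*} [CStarAlgebra A]
  [NormedAddCommGroup H] [InnerProductSpace ℂ H] [CompleteSpace H]
  [NormedAddCommGroup G] [InnerProductSpace ℂ G] [CompleteSpace G]
  [MeasurableSpace Y] {μ : Measure Y} {Φ : Y → CRep A H}

/-- A measurable field of representations on the constant Hilbert space `H`: measurability is
understood with respect to the strong operator topology. -/
def CRep.IsMeasurableField (Φ : Y → CRep A H) : Prop :=
  ∀ (a : A) (x : H), StronglyMeasurable fun y => Φ y a x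

theorem CRep.ae_not_unitarilyEquivalent
    (hnull : ∀ z, ∀ᵐ y ∂μ, ¬ (Φ z).UnitarilyEquivalent (Φ y)) (ρ : CRep A G) :
    ∀ᵐ y ∂μ, ¬ ρ.UnitarilyEquivalent (Φ y) := by
  by_cases hρ : ∃ z, ρ.UnitarilyEquivalent (Φ z)
  · obtain ⟨z, hz⟩ := hρ
    filter_upwards [hnull z] with y hy hρy
    exact hy (hz.symm.trans hρy)
  · exact ae_of_all _ (not_exists.1 hρ)

namespace CRep.IsMeasurableField

variable [SecondCountableTopology H] (hΦ : IsMeasurableField Φ)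

variable (μ) in
/-- The operator by which `a` acts in the direct integral of the field `Φ`. -/
def directIntegralOp (a : A) : Lp H 2 μ →L[ℂ] Lp H 2 μ :=
  decomposableOp 2 μ (hΦ a) fun y => (Φ y).norm_apply_le a

theorem coeFn_directIntegralOp (a : A) (ζ : Lp H 2 μ) :
    hΦ.directIntegralOp μ a ζ =ᵐ[μ] fun y => Φ y a (ζ y) :=
  coeFn_decomposableOp (hΦ a) (fun y => (Φ y).norm_apply_le a) ζ

theorem directIntegralOp_algebraMap (c : ℂ) :
    hΦ.directIntegralOp μ (algebraMap ℂ A c) = algebraMap ℂ (Lp H 2 μ →L[ℂ] Lp H 2 μ) c := by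
  refine ContinuousLinearMap.ext fun ζ => Lp.ext ?_
  rw [Algebra.algebraMap_eq_smul_one, Algebra.algebraMap_eq_smul_one]
  filter_upwards [hΦ.coeFn_directIntegralOp (c • (1 : A)) ζ, Lp.coeFn_smul c ζ] with y hy hcy
  rw [hy, smul_apply, one_apply_eq_self, hcy, map_smul, map_one, smul_apply, one_apply_eq_self,
    Pi.smul_apply]

theorem directIntegralOp_mul (a b : A) :
    hΦ.directIntegralOp μ (a * b) = hΦ.directIntegralOp μ a * hΦ.directIntegralOp μ b := by
  refine ContinuousLinearMap.ext fun ζ => Lp.ext ?_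
  filter_upwards [hΦ.coeFn_directIntegralOp (a * b) ζ, hΦ.coeFn_directIntegralOp b ζ,
    hΦ.coeFn_directIntegralOp a (hΦ.directIntegralOp μ b ζ)] with y hab hb ha
  rw [hab, mul_apply_eq_comp, ha, hb, map_mul, mul_apply_eq_comp]

theorem directIntegralOp_add (a b : A) :
    hΦ.directIntegralOp μ (a + b) = hΦ.directIntegralOp μ a + hΦ.directIntegralOp μ b := by
  refine ContinuousLinearMap.ext fun ζ => Lp.ext ?_
  filter_upwards [hΦ.coeFn_directIntegralOp (a + b) ζ, hΦ.coeFn_directIntegralOp a ζ,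
    hΦ.coeFn_directIntegralOp b ζ,
    Lp.coeFn_add (hΦ.directIntegralOp μ a ζ) (hΦ.directIntegralOp μ b ζ)] with y hab ha hb hadd
  rw [hab, add_apply, hadd, Pi.add_apply, ha, hb, map_add, add_apply]

theorem directIntegralOp_star (a : A) :
    hΦ.directIntegralOp μ (star a) = star (hΦ.directIntegralOp μ a) := by
  rw [ContinuousLinearMap.star_eq_adjoint, ContinuousLinearMap.eq_adjoint_iff]
  intro ζ η
  rw [L2.inner_def, L2.inner_def]
  refine integral_congr_ae ?_
  filter_upwards [hΦ.coeFn_directIntegralOp (star a) ζ, hΦ.coeFn_directIntegralOp a η]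
    with y hζ hη
  rw [hζ, hη, inner_apply_left, star_star]

variable (μ) in
/-- The direct integral of a measurable field of representations `Φ`, acting on `L²(Y, μ; H)`
by `(θ(a)ζ)(y) = Φ y a (ζ y)`. -/
def directIntegral : CRep A (Lp H 2 μ) where
  toFun := hΦ.directIntegralOp μ
  map_one' := by simpa only [map_one] using hΦ.directIntegralOp_algebraMap (μ := μ) 1
  map_mul' := hΦ.directIntegralOp_mul
  map_zero' := by simpa only [map_zero] using hΦ.directIntegralOp_algebraMap (μ := μ) 0
  map_add' := hΦ.directIntegralOp_add
  commutes' := hΦ.directIntegralOp_algebraMap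
  map_star' := hΦ.directIntegralOp_star

theorem coeFn_directIntegral (a : A) (ζ : Lp H 2 μ) :
    hΦ.directIntegral μ a ζ =ᵐ[μ] fun y => Φ y a (ζ y) :=
  hΦ.coeFn_directIntegralOp a ζ

variable [TopologicalSpace.SeparableSpace A]

variable {hΦ} in
theorem exists_ae_intertwines [FiniteDimensional ℂ G] {ρ : CRep A G} {V : G →L[ℂ] Lp H 2 μ}
    (hV : ρ.Intertwines (hΦ.directIntegral μ) V) :
    ∃ T : Y → G →L[ℂ] H, (∀ x, ∀ᵐ y ∂μ, T y x = V x y) ∧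
      ∀ᵐ y ∂μ, ρ.Intertwines (Φ y) (T y) := by
  obtain ⟨ev, hev⟩ := exists_linearMap_ae_eq_coeFn ℂ H 2 μ
  let T (y : Y) : G →L[ℂ] H := (ev y ∘ₗ (V : G →ₗ[ℂ] Lp H 2 μ)).toContinuousLinearMap
  have hT (x : G) : ∀ᵐ y ∂μ, T y x = V x y := hev (V x)
  let b := Module.finBasis ℂ G
  have hbasis (a : A) (i) : ∀ᵐ y ∂μ, T y (ρ a (b i)) = Φ y a (T y (b i)) := by
    filter_upwards [hT (ρ a (b i)), hT (b i), hΦ.coeFn_directIntegral a (V (b i))]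
      with y hρy hy hθy
    rw [hρy, hV, hθy, hy]
  have hall (a : A) : ∀ᵐ y ∂μ, ∀ x, T y (ρ a x) = Φ y a (T y x) := by
    filter_upwards [ae_all_iff.2 (hbasis a)] with y hy x
    exact LinearMap.congr_fun (b.ext (f₁ := (T y ∘L ρ a : G →ₗ[ℂ] H))
      (f₂ := (Φ y a ∘L T y : G →ₗ[ℂ] H)) hy) x
  obtain ⟨s, hs_countable, hs_dense⟩ := TopologicalSpace.exists_countable_dense A
  refine ⟨T, hT, ?_⟩
  filter_upwards [(ae_ball_iff hs_countable).2 fun a _ => hall a] with y hy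
  exact .of_dense hs_dense hy

theorem eq_zero_of_intertwines_directIntegral [FiniteDimensional ℂ G] {ρ : CRep A G}
    (hρ : CRepIrreducible ρ) (hirr : ∀ᵐ y ∂μ, CRepIrreducible (Φ y))
    (hnull : ∀ᵐ y ∂μ, ¬ ρ.UnitarilyEquivalent (Φ y)) {V : G →L[ℂ] Lp H 2 μ}
    (hV : ρ.Intertwines (hΦ.directIntegral μ) V) : V = 0 := by
  obtain ⟨T, hTV, hT⟩ := exists_ae_intertwines hV
  have hT0 : ∀ᵐ y ∂μ, T y = 0 := by
    filter_upwards [hT, hirr, hnull] with y hTy hy hny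
    by_contra hTy0
    exact hny (hρ.unitarilyEquivalent_of_intertwines hy hTy hTy0)
  refine ContinuousLinearMap.ext fun x => Lp.ext ?_
  filter_upwards [hT0, hTV x, Lp.coeFn_zero H 2 μ] with y hTy hy h0
  rw [← hy, hTy, zero_apply, zero_apply, h0, Pi.zero_apply]

theorem weaklyMixing_directIntegral (hirr : ∀ᵐ y ∂μ, CRepIrreducible (Φ y))
    (hnull : ∀ z, ∀ᵐ y ∂μ, ¬ (Φ z).UnitarilyEquivalent (Φ y)) :
    CRepWeaklyMixing (hΦ.directIntegral μ) := by
  refine .of_irreducible_restrict fun K _ _ hK hKirr => ?_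
  have hincl : K.subtypeL = 0 := hΦ.eq_zero_of_intertwines_directIntegral hKirr hirr
    (ae_not_unitarilyEquivalent hnull _) hK.intertwines_subtypeL
  exact (Submodule.eq_bot_iff K).2 fun ζ hζ => DFunLike.congr_fun hincl (⟨ζ, hζ⟩ : K)

end CRep.IsMeasurableField

theorem IrrRep.isMeasurableField_coe [SecondCountableTopology H] :
    CRep.IsMeasurableField fun y : IrrRep A H => (y : CRep A H) := fun a x =>
  have heval : Continuous fun (π : CRep A H) (a : A) (x : H) => π a x := continuous_induced_dom
  ((continuous_apply x).comp ((continuous_apply a).comp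
    (heval.comp continuous_subtype_val))).stronglyMeasurable

end DirectIntegral

theorem weaklyMixing_L2_of_null_equivalence_classes_general
    (A H₀ : Type*) [CStarAlgebra A] [TopologicalSpace.SeparableSpace A]
    [NormedAddCommGroup H₀] [InnerProductSpace ℂ H₀] [CompleteSpace H₀]
    [TopologicalSpace.SeparableSpace H₀] (μ : Measure (IrrRep A H₀))
    (hμ : ∀ σ : IrrRep A H₀,
      μ {κ : IrrRep A H₀ | ∃ Z : H₀ ≃ₗᵢ[ℂ] H₀,
        ∀ (a : A) (x : H₀), (κ : CRep A H₀) a (Z x) = Z ((σ : CRep A H₀) a x)} = 0) :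
    ∃ θ : CRep A (Lp H₀ 2 μ),
      (∀ (a : A) (ζ : Lp H₀ 2 μ),
        (θ a ζ : IrrRep A H₀ → H₀) =ᵐ[μ] fun y => (y : CRep A H₀) a (ζ y)) ∧
      CRepWeaklyMixing θ := by
  have : SecondCountableTopology H₀ := UniformSpace.secondCountable_of_separable H₀
  refine ⟨IrrRep.isMeasurableField_coe.directIntegral μ,
    IrrRep.isMeasurableField_coe.coeFn_directIntegral,
    IrrRep.isMeasurableField_coe.weaklyMixing_directIntegral ?_ ?_⟩
  · exact ae_of_all _ fun y => y.2
  · exact fun σ => measure_eq_zero_iff_ae_notMem.1 (hμ σ)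

open MeasureTheory in
/-- let `A` be a separable unital C*-algebra, `H₀` a nonzero finite-dimensional
Hilbert space, and `μ` a Borel probability measure on `Y = Irr(A,H₀)` vanishing on every
unitary equivalence class. Then the pointwise action `(θ(a)ζ)(π) = π(a)(ζ(π))` defines a
unital representation `θ` of `A` on `L²(Y,μ;H₀)`, and `θ` is weakly mixing. -/
theorem weaklyMixing_L2_of_null_equivalence_classes
    (A H₀ : Type*) [CStarAlgebra A] [TopologicalSpace.SeparableSpace A]
    [NormedAddCommGroup H₀] [InnerProductSpace ℂ H₀] [CompleteSpace H₀]
    [FiniteDimensional ℂ H₀] [Nontrivial H₀]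
    (μ : Measure (IrrRep A H₀)) [IsProbabilityMeasure μ]
    (hμ : ∀ σ : IrrRep A H₀,
      μ {κ : IrrRep A H₀ | ∃ Z : H₀ ≃ₗᵢ[ℂ] H₀,
        ∀ (a : A) (x : H₀), (κ : CRep A H₀) a (Z x) = Z ((σ : CRep A H₀) a x)} = 0) :
    ∃ θ : CRep A (Lp H₀ 2 μ),
      (∀ (a : A) (ζ : Lp H₀ 2 μ),
        (θ a ζ : IrrRep A H₀ → H₀) =ᵐ[μ] fun y => (y : CRep A H₀) a (ζ y)) ∧
      CRepWeaklyMixing θ := by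
  have : ProperSpace H₀ := FiniteDimensional.proper ℂ H₀
  exact weaklyMixing_L2_of_null_equivalence_classes_general A H₀ μ hμ
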